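/- Let n ≥ 4 be an even integer, let A be the matrix defined below, and let ε be a real number with 0 < ε ≤ 1/(56n³). If (x*, y*) is an ε²-approximate Nash equilibrium of the identical-payoff game with matrix A, then for every i ∈ {0,…,n/2−2} the following hold: x*_{i+1} ≤ ε, x*_{n−i} ≤ ε, y*_{i+1} ≤ ε, and y*_{n−i} ≤ ε. -/

import Mathlib

/-!
The nonzero entries of `A` form a weighted path. With `n = 2m`, order the rows and columns as
`row n, col 1, row 1, col n, row (n-1), col 2, row 2, col (n-1), …`, numbered `0, 1, …, 2n - 1`;
the `k`-th and `(k+1)`-st vertices are joined by the entry of value `k + 1`, and there are no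
other entries. Writing `z k` for the mass of vertex `k`, its utility is
`u k = k * z (k-1) + (k+1) * z (k+1)`.

Let `Q = P + ε²`, with `P` the equilibrium payoff. Every utility is at most `Q`
(`row_le`, `col_le`), the weighted regret satisfies `z k * (Q - u k) ≤ ε²`
(`row_regret`, `col_regret`), and `Q ≥ 1 / n` (`one_le_mul_payoff`).
Suppose `z (k-1) ≤ ε` but `z k > ε`. Then `u k ≥ Q - ε`, so `(k+1) * z (k+1) ≥ Q - (k+1) ε`, hence
`u (k+2) ≥ (k+2) * z (k+1)` would exceed `Q` (`path_step`). Induction along the path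
gives `z k ≤ ε` for all the vertices concerned.
-/

open Finset

/-- The `n × n` payoff matrix `A` (1-based indices), closed form:
for `i ∈ {0,…,n/2−1}`: `A_{i+1,i+1} = 4i+2`, `A_{i+1,n−i} = 4i+3`, `A_{n−i,i+1} = 4i+1`;
for `i ∈ {1,…,n/2−1}`: `A_{n−i,n−i+1} = 4i`; all other entries `0`. -/
noncomputable def Amat (n i j : ℕ) : ℝ :=
  if i = j ∧ 1 ≤ i ∧ i ≤ n / 2 then 4 * (i : ℝ) - 2
  else if i + j = n + 1 ∧ 1 ≤ i ∧ i ≤ n / 2 then 4 * (i : ℝ) - 1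
  else if i + j = n + 1 ∧ 1 ≤ j ∧ j ≤ n / 2 then 4 * (j : ℝ) - 3
  else if j = i + 1 ∧ n / 2 + 1 ≤ i ∧ i ≤ n - 1 then 4 * ((n : ℝ) - (i : ℝ))
  else 0

/-- `x` is a probability vector over coordinates `{1,…,n}`. -/
def ProbVec (n : ℕ) (x : ℕ → ℝ) : Prop :=
  (∀ k ∈ Finset.Icc 1 n, 0 ≤ x k) ∧ ∑ k ∈ Finset.Icc 1 n, x k = 1

/-- The common payoff `xᵀ A y`. -/
noncomputable def pay (n : ℕ) (x y : ℕ → ℝ) : ℝ :=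
  ∑ i ∈ Finset.Icc 1 n, ∑ j ∈ Finset.Icc 1 n, x i * Amat n i j * y j

/-- `(x, y)` is an `ε`-approximate Nash equilibrium of the identical-payoff game with matrix `A`. -/
def IsNashEq (n : ℕ) (ε : ℝ) (x y : ℕ → ℝ) : Prop :=
  ProbVec n x ∧ ProbVec n y ∧
  (∀ x', ProbVec n x' → pay n x y ≥ pay n x' y - ε) ∧
  (∀ y', ProbVec n y' → pay n x y ≥ pay n x y' - ε)

/-- `(I t, J t)` (for `t = 1, 2, …`) is a fictitious play sequence for the
identical-payoff game with matrix `A`. -/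
def IsFPSeq (n : ℕ) (I J : ℕ → ℕ) : Prop :=
  (∀ t, 1 ≤ t → I t ∈ Finset.Icc 1 n ∧ J t ∈ Finset.Icc 1 n) ∧
  ∀ t, 2 ≤ t →
    (∀ i ∈ Finset.Icc 1 n,
      ∑ s ∈ Finset.Icc 1 (t - 1), Amat n i (J s) ≤
        ∑ s ∈ Finset.Icc 1 (t - 1), Amat n (I t) (J s)) ∧
    (∀ j ∈ Finset.Icc 1 n,
      ∑ s ∈ Finset.Icc 1 (t - 1), Amat n (I s) j ≤
        ∑ s ∈ Finset.Icc 1 (t - 1), Amat n (I s) (J t))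

/-- Cumulative utility of row `r` at round `t`. -/
noncomputable def Rcum (n : ℕ) (J : ℕ → ℕ) (t r : ℕ) : ℝ :=
  ∑ s ∈ Finset.Icc 1 (t - 1), Amat n r (J s)

/-- Cumulative utility of column `c` at round `t`. -/
noncomputable def Ccum (n : ℕ) (I : ℕ → ℕ) (t c : ℕ) : ℝ :=
  ∑ s ∈ Finset.Icc 1 (t - 1), Amat n (I s) c

/-- Empirical strategy at round `T` of the player playing the sequence `I`. -/
noncomputable def empir (T : ℕ) (I : ℕ → ℕ) (k : ℕ) : ℝ :=
  (1 / (T : ℝ)) * ∑ s ∈ Finset.Icc 1 T, if I s = k then (1 : ℝ) else 0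

/-- The `k`-th standard basis vector (pure strategy `k`). -/
noncomputable def purevec (k : ℕ) : ℕ → ℝ := fun m => if m = k then 1 else 0

/-- Utility of the pure row `r` against the column strategy `y`. -/
noncomputable def rowU (n : ℕ) (y : ℕ → ℝ) (r : ℕ) : ℝ := ∑ j ∈ Finset.Icc 1 n, Amat n r j * y j

/-- Utility of the pure column `c` against the row strategy `x`. -/
noncomputable def colU (n : ℕ) (x : ℕ → ℝ) (c : ℕ) : ℝ := ∑ i ∈ Finset.Icc 1 n, x i * Amat n i c

lemma pay_eq_row (n : ℕ) (x y : ℕ → ℝ) :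
    pay n x y = ∑ i ∈ Finset.Icc 1 n, x i * rowU n y i := by
  simp only [pay, rowU, Finset.mul_sum, mul_assoc]

lemma pay_eq_col (n : ℕ) (x y : ℕ → ℝ) :
    pay n x y = ∑ j ∈ Finset.Icc 1 n, colU n x j * y j := by
  simp only [pay, colU, Finset.sum_mul]
  exact Finset.sum_comm

lemma probVec_purevec {n k : ℕ} (hk : k ∈ Finset.Icc 1 n) : ProbVec n (purevec k) := by
  constructor
  · intro m _
    unfold purevec
    split_ifs <;> norm_num
  · simp only [purevec, Finset.sum_ite_eq', hk, if_true]

lemma row_le {n : ℕ} {δ : ℝ} {x y : ℕ → ℝ} (h : IsNashEq n δ x y) {r : ℕ}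
    (hr : r ∈ Finset.Icc 1 n) : rowU n y r ≤ pay n x y + δ := by
  have h1 := h.2.2.1 _ (probVec_purevec hr)
  rw [pay_eq_row n (purevec r)] at h1
  simp only [purevec, ite_mul, one_mul, zero_mul, Finset.sum_ite_eq', hr, if_true] at h1
  linarith

lemma col_le {n : ℕ} {δ : ℝ} {x y : ℕ → ℝ} (h : IsNashEq n δ x y) {c : ℕ}
    (hc : c ∈ Finset.Icc 1 n) : colU n x c ≤ pay n x y + δ := by
  have h1 := h.2.2.2 _ (probVec_purevec hc)
  rw [pay_eq_col n x (purevec c)] at h1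
  simp only [purevec, mul_ite, mul_one, mul_zero, Finset.sum_ite_eq', hc, if_true] at h1
  linarith

/-- The quantities on the left are nonnegative and sum to `δ` over all rows. -/
lemma row_regret {n : ℕ} {δ : ℝ} {x y : ℕ → ℝ} (h : IsNashEq n δ x y) {r : ℕ}
    (hr : r ∈ Finset.Icc 1 n) : x r * (pay n x y + δ - rowU n y r) ≤ δ := by
  have h1 := Finset.single_le_sum (s := Finset.Icc 1 n)
    (f := fun r => x r * (pay n x y + δ - rowU n y r))
    (fun i hi => mul_nonneg (h.1.1 i hi) (by linarith [row_le h hi])) hr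
  have h2 : ∑ i ∈ Finset.Icc 1 n, x i * (pay n x y + δ - rowU n y i) = δ := by
    simp only [mul_sub, Finset.sum_sub_distrib, ← Finset.sum_mul, h.1.2, ← pay_eq_row]
    ring
  simpa only [h2] using h1

/-- The quantities on the left are nonnegative and sum to `δ` over all columns. -/
lemma col_regret {n : ℕ} {δ : ℝ} {x y : ℕ → ℝ} (h : IsNashEq n δ x y) {c : ℕ}
    (hc : c ∈ Finset.Icc 1 n) : y c * (pay n x y + δ - colU n x c) ≤ δ := by
  have h1 := Finset.single_le_sum (s := Finset.Icc 1 n)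
    (f := fun c => (pay n x y + δ - colU n x c) * y c)
    (fun i hi => mul_nonneg (by linarith [col_le h hi]) (h.2.1.1 i hi)) hc
  have h2 : ∑ i ∈ Finset.Icc 1 n, (pay n x y + δ - colU n x i) * y i = δ := by
    simp only [sub_mul, Finset.sum_sub_distrib, ← Finset.mul_sum, h.2.1.2, ← pay_eq_col]
    ring
  rw [mul_comm]
  simpa only [h2] using h1

lemma rowU_low {m i : ℕ} (hi : i < m) (y : ℕ → ℝ) :
    rowU (2 * m) y (i + 1) = (4 * i + 2) * y (i + 1) + (4 * i + 3) * y (2 * m - i) := by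
  have h : ∀ j ∈ Finset.Icc 1 (2 * m), Amat (2 * m) (i + 1) j * y j =
      (if j = i + 1 then (4 * (i : ℝ) + 2) * y j else 0)
        + (if j = 2 * m - i then (4 * (i : ℝ) + 3) * y j else 0) := by
    intro j hj
    rw [Finset.mem_Icc] at hj
    unfold Amat
    split_ifs <;> first | omega | (push_cast; ring)
  rw [rowU, Finset.sum_congr rfl h, Finset.sum_add_distrib, Finset.sum_ite_eq', Finset.sum_ite_eq',
    if_pos (Finset.mem_Icc.2 (by omega)), if_pos (Finset.mem_Icc.2 (by omega))]

/-- For `i = 0` the index `2 * m - i + 1` is out of range, but its coefficient vanishes. -/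
lemma rowU_high {m i : ℕ} (hi : i < m) (y : ℕ → ℝ) :
    rowU (2 * m) y (2 * m - i) = 4 * i * y (2 * m - i + 1) + (4 * i + 1) * y (i + 1) := by
  have h : ∀ j ∈ Finset.Icc 1 (2 * m), Amat (2 * m) (2 * m - i) j * y j =
      (if j = 2 * m - i + 1 then 4 * (i : ℝ) * y j else 0)
        + (if j = i + 1 then (4 * (i : ℝ) + 1) * y j else 0) := by
    intro j hj
    rw [Finset.mem_Icc] at hj
    unfold Amat
    have hc : ((2 * m - i : ℕ) : ℝ) = 2 * m - i := by
      rw [Nat.cast_sub (by omega)]; push_cast; ring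
    split_ifs <;> first | omega | (subst_vars; push_cast [hc]; ring)
  rw [rowU, Finset.sum_congr rfl h, Finset.sum_add_distrib, Finset.sum_ite_eq', Finset.sum_ite_eq',
    if_pos (c := i + 1 ∈ _) (Finset.mem_Icc.2 (by omega))]
  rcases Nat.eq_zero_or_pos i with rfl | hpos
  · simp
  · rw [if_pos (Finset.mem_Icc.2 (by omega))]

lemma colU_low {m i : ℕ} (hi : i < m) (x : ℕ → ℝ) :
    colU (2 * m) x (i + 1) = (4 * i + 1) * x (2 * m - i) + (4 * i + 2) * x (i + 1) := by
  have h : ∀ j ∈ Finset.Icc 1 (2 * m), x j * Amat (2 * m) j (i + 1) =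
      (if j = 2 * m - i then (4 * (i : ℝ) + 1) * x j else 0)
        + (if j = i + 1 then (4 * (i : ℝ) + 2) * x j else 0) := by
    intro j hj
    rw [Finset.mem_Icc] at hj
    unfold Amat
    split_ifs <;> first | omega | (subst_vars; push_cast; ring)
  rw [colU, Finset.sum_congr rfl h, Finset.sum_add_distrib, Finset.sum_ite_eq', Finset.sum_ite_eq',
    if_pos (Finset.mem_Icc.2 (by omega)), if_pos (Finset.mem_Icc.2 (by omega))]

/-- The case `i = m - 1` is excluded: column `m + 1` is the end of the path. -/
lemma colU_high {m i : ℕ} (hi : i + 1 < m) (x : ℕ → ℝ) :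
    colU (2 * m) x (2 * m - i) =
      (4 * i + 3) * x (i + 1) + (4 * i + 4) * x (2 * m - (i + 1)) := by
  have h : ∀ j ∈ Finset.Icc 1 (2 * m), x j * Amat (2 * m) j (2 * m - i) =
      (if j = i + 1 then (4 * (i : ℝ) + 3) * x j else 0)
        + (if j = 2 * m - (i + 1) then (4 * (i : ℝ) + 4) * x j else 0) := by
    intro j hj
    rw [Finset.mem_Icc] at hj
    unfold Amat
    have hc : ((2 * m - (i + 1) : ℕ) : ℝ) = 2 * m - (i + 1) := by
      rw [Nat.cast_sub (by omega)]; push_cast; ring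
    split_ifs <;> first | omega | (subst_vars; push_cast [hc]; ring)
  rw [colU, Finset.sum_congr rfl h, Finset.sum_add_distrib, Finset.sum_ite_eq', Finset.sum_ite_eq',
    if_pos (Finset.mem_Icc.2 (by omega)), if_pos (Finset.mem_Icc.2 (by omega))]

/-- Each column meets one of the rows `1, …, m` in an entry at least `1`, so each coordinate of
`y` is bounded by some row utility. -/
lemma one_le_mul_payoff {m : ℕ} {δ : ℝ} {x y : ℕ → ℝ} (h : IsNashEq (2 * m) δ x y) :
    1 ≤ ((2 * m : ℕ) : ℝ) * (pay (2 * m) x y + δ) := by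
  have key : ∀ i < m, y (i + 1) ≤ pay (2 * m) x y + δ ∧ y (2 * m - i) ≤ pay (2 * m) x y + δ := by
    intro i hi
    have h1 := row_le h (r := i + 1) (Finset.mem_Icc.2 (by omega))
    rw [rowU_low hi] at h1
    have h2 := h.2.1.1 (i + 1) (Finset.mem_Icc.2 (by omega))
    have h3 := h.2.1.1 (2 * m - i) (Finset.mem_Icc.2 (by omega))
    have h4 : (0 : ℝ) ≤ i := Nat.cast_nonneg i
    constructor <;> nlinarith [mul_nonneg h4 h2, mul_nonneg h4 h3]
  have hle : ∀ c ∈ Finset.Icc 1 (2 * m), y c ≤ pay (2 * m) x y + δ := by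
    intro c hc
    rw [Finset.mem_Icc] at hc
    rcases Nat.lt_or_ge m c with hlt | hge
    · have := (key (2 * m - c) (by omega)).2
      rwa [show 2 * m - (2 * m - c) = c by omega] at this
    · have := (key (c - 1) (by omega)).1
      rwa [show c - 1 + 1 = c by omega] at this
  have h1 := Finset.sum_le_card_nsmul _ _ _ hle
  rw [h.2.1.2, Nat.card_Icc, nsmul_eq_mul] at h1
  simpa using h1

/-- One step along the path: a vertex of mass `z` with utility `u`, whose predecessor has mass `p`
and whose successor has mass `q`; `w` is the utility of the vertex two places further. -/
lemma path_step {N Q ε a z p q u w : ℝ} (hN : 4 ≤ N) (hε0 : 0 < ε)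
    (hε1 : ε ≤ 1 / (56 * N ^ 3)) (hQ : 1 ≤ N * Q) (ha : 0 ≤ a) (haN : a + 2 ≤ 2 * N)
    (hz : z * (Q - u) ≤ ε ^ 2) (hu : u = a * p + (a + 1) * q) (hp : a * p ≤ a * ε)
    (hq : (a + 2) * q ≤ w) (hw : w ≤ Q) : z ≤ ε := by
  by_contra! hlt
  have h1 : Q - u < ε := by
    by_contra! h
    nlinarith
  have h2 : Q - (a + 1) * ε < (a + 1) * q := by linarith
  have h3 : Q < (a + 1) * (a + 2) * ε := by nlinarith
  have h4 : (a + 1) * (a + 2) ≤ 4 * N ^ 2 := by nlinarith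
  have h5 : Q < 4 * N ^ 2 * ε := h3.trans_le (mul_le_mul_of_nonneg_right h4 hε0.le)
  have h6 : ε * (56 * N ^ 3) ≤ 1 := (le_div_iff₀ (by positivity)).1 hε1
  nlinarith

/-- in any ε²-approximate Nash equilibrium, all the coordinates
`i+1` and `n−i` for `i ∈ {0,…,n/2−2}` carry mass at most ε. -/
theorem approx_nash_small_outer_mass
    (n : ℕ) (hn : 4 ≤ n) (hneven : Even n)
    (ε : ℝ) (hε0 : 0 < ε) (hε1 : ε ≤ 1 / (56 * (n : ℝ) ^ 3))
    (x y : ℕ → ℝ) (hNE : IsNashEq n (ε ^ 2) x y) :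
    ∀ i ≤ n / 2 - 2,
      x (i + 1) ≤ ε ∧ x (n - i) ≤ ε ∧ y (i + 1) ≤ ε ∧ y (n - i) ≤ ε := by
  obtain ⟨m, hm⟩ := hneven
  obtain rfl : n = 2 * m := by omega
  have hN : (4 : ℝ) ≤ ((2 * m : ℕ) : ℝ) := by exact_mod_cast hn
  have hQ := one_le_mul_payoff hNE
  have hx := hNE.1.1
  have hy := hNE.2.1.1
  -- The four consecutive path vertices with numbers `4i, …, 4i + 3`, given a bound on the mass
  -- of the vertex before them.
  have block : ∀ i, i + 2 ≤ m → 4 * (i : ℝ) * y (2 * m - i + 1) ≤ 4 * i * ε →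
      x (i + 1) ≤ ε ∧ x (2 * m - i) ≤ ε ∧ y (i + 1) ≤ ε ∧ y (2 * m - i) ≤ ε := by
    intro i hi hprev
    have hi0 : (0 : ℝ) ≤ i := Nat.cast_nonneg i
    have hiN : 4 * (i : ℝ) + 8 ≤ 2 * ((2 * m : ℕ) : ℝ) := by
      have : 4 * i + 8 ≤ 2 * (2 * m) := by omega
      exact_mod_cast this
    have hm1 : i + 1 ∈ Finset.Icc 1 (2 * m) := Finset.mem_Icc.2 (by omega)
    have hm2 : 2 * m - i ∈ Finset.Icc 1 (2 * m) := Finset.mem_Icc.2 (by omega)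
    have hm3 : i + 1 + 1 ∈ Finset.Icc 1 (2 * m) := Finset.mem_Icc.2 (by omega)
    have hm4 : 2 * m - (i + 1) ∈ Finset.Icc 1 (2 * m) := Finset.mem_Icc.2 (by omega)
    have e0 := rowU_high (m := m) (i := i) (by omega) y
    have e1 := colU_low (m := m) (i := i) (by omega) x
    have e2 := rowU_low (m := m) (i := i) (by omega) y
    have e3 := colU_high (m := m) (i := i) (by omega) x
    have e4 := rowU_high (m := m) (i := i + 1) (by omega) y
    have e5 := colU_low (m := m) (i := i + 1) (by omega) x
    rw [show 2 * m - (i + 1) + 1 = 2 * m - i by omega] at e4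
    push_cast at e4 e5
    have b0 : x (2 * m - i) ≤ ε := by
      refine path_step (a := 4 * i) hN hε0 hε1 hQ (by linarith) (by linarith)
        (row_regret hNE hm2) e0 hprev ?_ (row_le hNE hm1)
      rw [e2]
      nlinarith [mul_nonneg hi0 (hy _ hm2), hy _ hm2]
    have b1 : y (i + 1) ≤ ε := by
      refine path_step (a := 4 * i + 1) (q := x (i + 1)) hN hε0 hε1 hQ (by linarith) (by linarith)
        (col_regret hNE hm1) (e1.trans (by ring))
        (mul_le_mul_of_nonneg_left b0 (by linarith)) ?_ (col_le hNE hm2)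
      rw [e3]
      nlinarith [mul_nonneg hi0 (hx _ hm4), hx _ hm4]
    have b2 : x (i + 1) ≤ ε := by
      refine path_step (a := 4 * i + 2) (q := y (2 * m - i)) hN hε0 hε1 hQ (by linarith)
        (by linarith) (row_regret hNE hm1) (e2.trans (by ring))
        (mul_le_mul_of_nonneg_left b1 (by linarith)) ?_ (row_le hNE hm4)
      rw [e4]
      nlinarith [mul_nonneg hi0 (hy _ hm3), hy _ hm3]
    have b3 : y (2 * m - i) ≤ ε := by
      refine path_step (a := 4 * i + 3) (q := x (2 * m - (i + 1))) hN hε0 hε1 hQ (by linarith)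
        (by linarith) (col_regret hNE hm2) (e3.trans (by ring))
        (mul_le_mul_of_nonneg_left b2 (by linarith)) ?_ (col_le hNE hm3)
      rw [e5]
      nlinarith [mul_nonneg hi0 (hx _ hm3), hx _ hm3]
    exact ⟨b2, b0, b1, b3⟩
  intro i
  induction i with
  | zero =>
    intro _
    exact block 0 (by omega) (by simp)
  | succ i ih =>
    intro hi
    refine block (i + 1) (by omega) ?_
    rw [show 2 * m - (i + 1) + 1 = 2 * m - i by omega]
    exact mul_le_mul_of_nonneg_left (ih (by omega)).2.2.2 (by positivity)
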